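/- arXiv:math/0609258 — 2 statements merged into one kernel-verified Lean document; each statement's English description precedes it below -/
import Mathlib

section
/- Let n ≥ 1 and let λ be a partition of n. There is exactly one isomorphism class of irreducible finite-dimensional complex representations V of the symmetric group S_n such that both ⟨φ_λ, χ_V⟩ ≠ 0 and ⟨ψ_λ, χ_V⟩ ≠ 0, where χ_V is the character of V; moreover, for this unique V one has ⟨φ_λ, χ_V⟩ = 1 and ⟨ψ_λ, χ_V⟩ = 1. (In other words, the induced representations Ind_{H(λ)}^{S_n} 1 and Ind_{V(λ)}^{S_n} sgn have exactly one common irreducible constituent, which occurs with multiplicity one in each.) -/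
open scoped Classical

noncomputable section

open MvPolynomial

/-- Partial sums of the row lengths of a Young diagram. -/
def rowPartialSum (lam : YoungDiagram) (i : ℕ) : ℕ :=
  ∑ j ∈ Finset.range i, lam.rowLen j

/-- The (0-indexed) row of the canonical tableau of shape `lam` containing the entry `m`
(the entries `0,…,n-1` fill the cells consecutively row by row). -/
def rowIndex (lam : YoungDiagram) (m : ℕ) : ℕ :=
  ((Finset.range (m + 1)).filter fun i => rowPartialSum lam (i + 1) ≤ m).card

/-- The Young subgroup `H(λ) ≤ S_n`: permutations preserving each row of the canonical
tableau of shape `λ`. -/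
def youngH (n : ℕ) (lam : YoungDiagram) : Subgroup (Equiv.Perm (Fin n)) where
  carrier := {g | ∀ m : Fin n, rowIndex lam (g m) = rowIndex lam m}
  one_mem' := by intro m; simp
  mul_mem' := by
    intro a b ha hb m
    have h1 := ha (b m)
    have h2 := hb m
    simpa [Equiv.Perm.mul_apply] using h1.trans h2
  inv_mem' := by
    intro a ha m
    simpa using (ha (a⁻¹ m)).symm

/-- The (0-indexed) column of the canonical tableau of shape `lam` containing the entry `m`. -/
def colIndex (lam : YoungDiagram) (m : ℕ) : ℕ :=
  m - rowPartialSum lam (rowIndex lam m)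

/-- The Young subgroup `V(λ) ≤ S_n`: permutations preserving each column of the canonical
tableau of shape `λ`. -/
def youngV (n : ℕ) (lam : YoungDiagram) : Subgroup (Equiv.Perm (Fin n)) where
  carrier := {g | ∀ m : Fin n, colIndex lam (g m) = colIndex lam m}
  one_mem' := by intro m; simp
  mul_mem' := by
    intro a b ha hb m
    have h1 := ha (b m)
    have h2 := hb m
    simpa [Equiv.Perm.mul_apply] using h1.trans h2
  inv_mem' := by
    intro a ha m
    simpa using (ha (a⁻¹ m)).symm

/-- The character of the representation induced from the trivial representation of a
subgroup `H`:  `φ(g) = (1/|H|) · #{x : x⁻¹ g x ∈ H}`. -/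
noncomputable def indTrivChar {G : Type*} [Group G] (H : Subgroup G) (g : G) : ℂ :=
  (Nat.card H : ℂ)⁻¹ * (Nat.card {x : G // x⁻¹ * g * x ∈ H} : ℂ)

/-- The character of the representation induced from the sign representation of a
subgroup `V` of the symmetric group:  `ψ(g) = (1/|V|) · Σ_{x : x⁻¹gx ∈ V} sgn(x⁻¹gx)`. -/
noncomputable def indSgnChar {n : ℕ} (V : Subgroup (Equiv.Perm (Fin n)))
    (g : Equiv.Perm (Fin n)) : ℂ :=
  (Nat.card V : ℂ)⁻¹ *
    ∑ x : Equiv.Perm (Fin n),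
      if x⁻¹ * g * x ∈ V then ((Equiv.Perm.sign (x⁻¹ * g * x) : ℤ) : ℂ) else 0

/-- The inner product of class functions on a finite group:
`⟨a,b⟩ = (1/|G|) Σ_g a g * conj (b g)`. -/
noncomputable def innerChar {G : Type*} [Group G] [Fintype G] (a b : G → ℂ) : ℂ :=
  (Fintype.card G : ℂ)⁻¹ * ∑ g : G, a g * (starRingEnd ℂ) (b g)

/-! Let `a` be the average over `H(λ)` and `b` the sign-weighted average over `V(λ)` in the group
algebra `A`. They are idempotents, and by Frobenius reciprocity `⟨φ_λ, χ_V⟩ = dim aV` and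
`⟨ψ_λ, χ_V⟩ = dim bV`. If `g ∈ S_n` maps no two entries of a column of `t_λ` into the same row,
then `g = hv` with `h ∈ H(λ)`, `v ∈ V(λ)` (von Neumann's lemma), so `a g b = ± a b`; otherwise `g`
conjugates a transposition of `V(λ)` into `H(λ)`, and `a g b = 0`. Hence `a A b` is the line spanned
by `a b`, which is nonzero because `H(λ) ∩ V(λ) = 1`.

Semisimplicity gives a simple module on which `a b` does not vanish. In any simple module `M` with
`aM ≠ 0` and `bM ≠ 0`, the line `a A b` forces `aM` and `bM` to be one-dimensional, and for
`bu ≠ 0` the annihilator of `bu` is `{x | a A x b = 0}`, so that `M ≅ A / Ann(bu)` does not depend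
on `M`. -/

/-! ### Combinatorics of the canonical tableau -/

section CanonicalTableau

variable {lam : YoungDiagram} {i m : ℕ}

theorem rowPartialSum_succ (lam : YoungDiagram) (i : ℕ) :
    rowPartialSum lam (i + 1) = rowPartialSum lam i + lam.rowLen i :=
  Finset.sum_range_succ _ _

theorem rowPartialSum_mono (lam : YoungDiagram) : Monotone (rowPartialSum lam) :=
  monotone_nat_of_le_succ fun i => (rowPartialSum_succ lam i).ge.trans' (Nat.le_add_right _ _)

theorem card_le_rowPartialSum (h : lam.rowLen i = 0) : lam.card ≤ rowPartialSum lam i := by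
  have hcover : lam.cells ⊆ (Finset.range i).biUnion lam.row := by
    intro x hx
    simp only [Finset.mem_biUnion, Finset.mem_range, YoungDiagram.mem_row_iff]
    refine ⟨x.1, not_le.1 fun hle => ?_, (YoungDiagram.mem_cells _).1 hx, rfl⟩
    have hlt := YoungDiagram.mem_iff_lt_rowLen.1 ((YoungDiagram.mem_cells _).1 hx)
    have hanti := lam.rowLen_anti i x.1 hle
    omega
  calc lam.card ≤ ((Finset.range i).biUnion lam.row).card := Finset.card_le_card hcover
    _ ≤ ∑ j ∈ Finset.range i, (lam.row j).card := Finset.card_biUnion_le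
    _ = rowPartialSum lam i := by simp only [rowPartialSum, YoungDiagram.rowLen_eq_card]

theorem lt_rowPartialSum_succ (hm : m < lam.card) : m < rowPartialSum lam (m + 1) := by
  by_cases hzero : ∃ i ≤ m + 1, lam.rowLen i = 0
  · obtain ⟨i, hi, h⟩ := hzero
    exact hm.trans_le ((card_le_rowPartialSum h).trans (rowPartialSum_mono lam hi))
  · push Not at hzero
    calc m < ∑ _i ∈ Finset.range (m + 1), 1 := by simp
      _ ≤ rowPartialSum lam (m + 1) := Finset.sum_le_sum fun i hi =>
        Nat.one_le_iff_ne_zero.2 (hzero i (Finset.mem_range.1 hi).le)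

theorem rowIndex_eq_find (h : ∃ i, m < rowPartialSum lam (i + 1)) (hm : m < lam.card) :
    rowIndex lam m = Nat.find h := by
  suffices hrange : ((Finset.range (m + 1)).filter fun i => rowPartialSum lam (i + 1) ≤ m) =
      Finset.range (Nat.find h) by rw [rowIndex, hrange, Finset.card_range]
  ext i
  simp only [Finset.mem_filter, Finset.mem_range, Nat.lt_find_iff, not_lt]
  refine ⟨fun hi j hj => (rowPartialSum_mono lam (by omega)).trans hi.2,
    fun hi => ⟨?_, hi i le_rfl⟩⟩
  by_contra hle
  exact (lt_rowPartialSum_succ hm).not_ge (hi m (by omega))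

theorem rowPartialSum_rowIndex_le (hm : m < lam.card) :
    rowPartialSum lam (rowIndex lam m) ≤ m := by
  have h : ∃ i, m < rowPartialSum lam (i + 1) := ⟨m, lt_rowPartialSum_succ hm⟩
  rw [rowIndex_eq_find h hm]
  rcases hi : Nat.find h with _ | i
  · exact Nat.zero_le m
  · exact not_lt.1 (Nat.find_min h (hi ▸ i.lt_succ_self))

theorem lt_rowPartialSum_rowIndex_succ (hm : m < lam.card) :
    m < rowPartialSum lam (rowIndex lam m + 1) := by
  have h : ∃ i, m < rowPartialSum lam (i + 1) := ⟨m, lt_rowPartialSum_succ hm⟩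
  rw [rowIndex_eq_find h hm]
  exact Nat.find_spec h

variable (lam) in
/-- The cell of the Young diagram `lam` in which the canonical tableau has the entry `m`. -/
def tableauCell (m : Fin lam.card) : ℕ × ℕ :=
  (rowIndex lam m, colIndex lam m)

theorem tableauCell_mem_cells (m : Fin lam.card) : tableauCell lam m ∈ lam.cells := by
  rw [YoungDiagram.mem_cells, tableauCell, YoungDiagram.mem_iff_lt_rowLen, colIndex]
  have hle := rowPartialSum_rowIndex_le m.2
  have hlt := lt_rowPartialSum_rowIndex_succ m.2
  rw [rowPartialSum_succ] at hlt
  omega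

theorem tableauCell_injective : Function.Injective (tableauCell lam) := by
  intro x y hxy
  obtain ⟨hrow, hcol⟩ := Prod.mk.inj hxy
  have hx := rowPartialSum_rowIndex_le x.2
  have hy := rowPartialSum_rowIndex_le y.2
  rw [colIndex, colIndex, hrow] at hcol
  rw [hrow] at hx
  omega

theorem image_tableauCell : Finset.univ.image (tableauCell lam) = lam.cells := by
  refine Finset.eq_of_subset_of_card_le ?_ ?_
  · exact Finset.image_subset_iff.2 fun m _ => tableauCell_mem_cells m
  · rw [Finset.card_image_of_injective _ tableauCell_injective, Finset.card_univ, Fintype.card_fin]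

theorem disjoint_youngH_youngV : Disjoint (youngH lam.card lam) (youngV lam.card lam) := by
  rw [Subgroup.disjoint_def]
  intro g hH hV
  ext m
  exact congrArg Fin.val (tableauCell_injective (Prod.ext (hH m) (hV m)))

theorem swap_mem_youngH {n : ℕ} {x y : Fin n} (h : rowIndex lam x = rowIndex lam y) :
    Equiv.swap x y ∈ youngH n lam :=
  Equiv.apply_swap_eq_self (v := fun m : Fin n => rowIndex lam m) h

theorem swap_mem_youngV {n : ℕ} {x y : Fin n} (h : colIndex lam x = colIndex lam y) :
    Equiv.swap x y ∈ youngV n lam :=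
  Equiv.apply_swap_eq_self (v := fun m : Fin n => colIndex lam m) h

end CanonicalTableau

theorem subset_of_sum_eq_of_neg_iff {α M : Type*} [AddCommGroup M] [LinearOrder M]
    [IsOrderedAddMonoid M] {s t : Finset α} {w : α → M} (hw : ∀ a, w a < 0 ↔ a ∈ t)
    (h : ∑ a ∈ s, w a = ∑ a ∈ t, w a) : t ⊆ s := by
  rw [← Finset.sdiff_eq_empty_iff_subset]
  by_contra hne
  have hneg : ∑ a ∈ t \ s, w a < 0 :=
    Finset.sum_neg (fun a ha => (hw a).2 (Finset.mem_sdiff.1 ha).1)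
      (Finset.nonempty_iff_ne_empty.2 hne)
  have hnonneg : 0 ≤ ∑ a ∈ s \ t, w a :=
    Finset.sum_nonneg fun a ha => not_lt.1 ((hw a).not.2 (Finset.mem_sdiff.1 ha).2)
  rw [← Finset.sum_sdiff_eq_sum_sdiff_iff] at h
  exact hneg.not_ge (h ▸ hnonneg)

section VonNeumann

variable {lam : YoungDiagram} {g : Equiv.Perm (Fin lam.card)}

theorem image_rowIndex_colIndex_eq_cells
    (hg : Function.Injective fun m => (rowIndex lam (g m), colIndex lam m)) :
    Finset.univ.image (fun m => (rowIndex lam (g m), colIndex lam m)) = lam.cells := by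
  -- The weight `i - colLen j` of the cell `(i, j)` is negative exactly on the diagram, and its sum
  -- over the image does not depend on `g`.
  have hneg (p : ℕ × ℕ) : (p.1 - lam.colLen p.2 : ℤ) < 0 ↔ p ∈ lam.cells := by
    rw [sub_neg, Nat.cast_lt, YoungDiagram.mem_cells, ← YoungDiagram.mem_iff_lt_colLen]
  refine (Finset.eq_of_subset_of_card_le (subset_of_sum_eq_of_neg_iff hneg ?_) ?_).symm
  · rw [← image_tableauCell, Finset.sum_image hg.injOn,
      Finset.sum_image tableauCell_injective.injOn]
    simp only [tableauCell, Finset.sum_sub_distrib]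
    rw [Equiv.sum_comp g fun m : Fin lam.card => (rowIndex lam m : ℤ)]
  · rw [Finset.card_image_of_injective _ hg, Finset.card_univ, Fintype.card_fin]

theorem exists_eq_mul_of_injective
    (hg : Function.Injective fun m => (rowIndex lam (g m), colIndex lam m)) :
    ∃ h ∈ youngH lam.card lam, ∃ v ∈ youngV lam.card lam, g = h * v := by
  have hcell (m : Fin lam.card) :
      ∃ m', tableauCell lam m' = (rowIndex lam (g m), colIndex lam m) := by
    have hmem := Finset.mem_image_of_mem (fun m => (rowIndex lam (g m), colIndex lam m))
      (Finset.mem_univ m)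
    rw [image_rowIndex_colIndex_eq_cells hg, ← image_tableauCell] at hmem
    simpa only [Finset.mem_image, Finset.mem_univ, true_and] using hmem
  choose f hf using hcell
  have hf_inj : Function.Injective f := fun x y hxy => hg (by simp only [← hf, hxy])
  let v : Equiv.Perm (Fin lam.card) := .ofBijective f (Finite.injective_iff_bijective.1 hf_inj)
  refine ⟨g * v⁻¹, fun m => ?_, v, fun m => congrArg Prod.snd (hf m), by simp⟩
  have hrow : rowIndex lam (v (v⁻¹ m)) = rowIndex lam (g (v⁻¹ m)) := congrArg Prod.fst (hf _)
  simpa using hrow.symm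

theorem exists_eq_mul_or_exists_conj_mem (g : Equiv.Perm (Fin lam.card)) :
    (∃ h ∈ youngH lam.card lam, ∃ v ∈ youngV lam.card lam, g = h * v) ∨
      ∃ v ∈ youngV lam.card lam, g * v * g⁻¹ ∈ youngH lam.card lam ∧
        (1 : Equiv.Perm (Fin lam.card) →* ℤˣ) (g * v * g⁻¹) ≠ Equiv.Perm.sign v := by
  by_cases hg : Function.Injective fun m => (rowIndex lam (g m), colIndex lam m)
  · exact .inl (exists_eq_mul_of_injective hg)
  · obtain ⟨x, y, hxy, hne⟩ := Function.not_injective_iff.1 hg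
    obtain ⟨hrow, hcol⟩ := Prod.mk.inj hxy
    refine .inr ⟨Equiv.swap x y, swap_mem_youngV hcol, ?_, ?_⟩
    · rw [Equiv.mul_swap_eq_swap_mul, mul_inv_cancel_right]
      exact swap_mem_youngH hrow
    · rw [Equiv.Perm.sign_swap hne, MonoidHom.one_apply]
      decide

end VonNeumann

/-! ### Algebras compressed to a line -/

/-- `a` and `b` compress the algebra to a line: `a * x * b` is always a scalar multiple of
`a * b`. For the row and column averages of a tableau this is the algebraic form of
von Neumann's lemma. -/
def IsSandwich (k : Type*) {A : Type*} [CommSemiring k] [Semiring A] [Algebra k A] (a b : A) :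
    Prop :=
  ∀ x, ∃ s : k, a * x * b = s • (a * b)

namespace IsSandwich

open Module

variable {k A M N : Type*} [Field k] [Ring A] [Algebra k A] {a b : A}
  [AddCommGroup M] [Module k M] [Module A M] [IsScalarTower k A M]
  [AddCommGroup N] [Module k N] [Module A N] [IsScalarTower k A N] [IsSimpleModule A N]

theorem exists_smul_eq (h : IsSandwich k a b) (x : A) :
    ∃ s : k, ∀ u : M, a • x • b • u = s • a • b • u := by
  obtain ⟨s, hs⟩ := h x
  exact ⟨s, fun u => by simp only [← mul_smul, ← mul_assoc, hs, smul_assoc]⟩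

theorem torsionOf_le_torsionOf (h : IsSandwich k a b) {u : M} {v : N} (hu : a • b • u ≠ 0)
    (hv : a • b • v ≠ 0) : Ideal.torsionOf A M (b • u) ≤ Ideal.torsionOf A N (b • v) := by
  intro x hx
  rw [Ideal.mem_torsionOf_iff] at hx ⊢
  by_contra hxv
  obtain ⟨y, hy : y • x • b • v = b • v⟩ :=
    IsSimpleModule.toSpanSingleton_surjective A hxv (b • v)
  obtain ⟨s, hs⟩ := h (y * x)
  have hM : s • a • b • u = 0 := by
    simpa [mul_smul, hx] using congr($hs.symm • u)
  have hN : a • b • v = s • a • b • v := by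
    simpa [mul_smul, hy] using congr($hs • v)
  rw [(smul_eq_zero.1 hM).resolve_right hu, zero_smul] at hN
  exact hv hN

variable [IsSimpleModule A M]

theorem smul_smul_ne_zero (h : IsSandwich k a b) {u : M} (ha : ∃ y : M, a • y ≠ 0)
    (hu : b • u ≠ 0) : a • b • u ≠ 0 := by
  intro h0
  obtain ⟨y, hy⟩ := ha
  obtain ⟨x, rfl⟩ := IsSimpleModule.toSpanSingleton_surjective A hu y
  obtain ⟨s, hs⟩ := h.exists_smul_eq (M := M) x
  exact hy (by simp [hs, h0])

theorem range_lsmul_left (h : IsSandwich k a b) {u : M} (hu : b • u ≠ 0) :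
    LinearMap.range (Algebra.lsmul k k M a) = Submodule.span k {a • b • u} := by
  refine le_antisymm ?_ ((Submodule.span_singleton_le_iff_mem _ _).2 ⟨b • u, rfl⟩)
  rintro _ ⟨y, rfl⟩
  obtain ⟨x, rfl⟩ := IsSimpleModule.toSpanSingleton_surjective A hu y
  obtain ⟨s, hs⟩ := h.exists_smul_eq (M := M) x
  exact Submodule.mem_span_singleton.2 ⟨s, (hs u).symm⟩

theorem range_lsmul_right (h : IsSandwich k a b) {u : M} (ha : ∃ y : M, a • y ≠ 0)
    (hu : b • u ≠ 0) :
    LinearMap.range (Algebra.lsmul k k M b) = Submodule.span k {b • u} := by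
  refine le_antisymm ?_ ((Submodule.span_singleton_le_iff_mem _ _).2 ⟨u, rfl⟩)
  rintro _ ⟨v, rfl⟩
  obtain ⟨s, hs⟩ : ∃ s : k, s • a • b • u = a • b • v :=
    Submodule.mem_span_singleton.1 (h.range_lsmul_left hu ▸ ⟨b • v, rfl⟩)
  have hb : b • (s • u - v) = 0 := by
    by_contra hne
    refine h.smul_smul_ne_zero ha hne ?_
    rw [smul_sub, smul_sub, smul_comm b s, smul_comm a s, hs, sub_self]
  refine Submodule.mem_span_singleton.2 ⟨s, ?_⟩
  rwa [smul_sub, smul_comm, sub_eq_zero] at hb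

theorem finrank_range_lsmul_left (h : IsSandwich k a b) (ha : ∃ y : M, a • y ≠ 0)
    (hb : ∃ y : M, b • y ≠ 0) : finrank k (LinearMap.range (Algebra.lsmul k k M a)) = 1 := by
  obtain ⟨u, hu⟩ := hb
  rw [h.range_lsmul_left hu, finrank_span_singleton (h.smul_smul_ne_zero ha hu)]

theorem finrank_range_lsmul_right (h : IsSandwich k a b) (ha : ∃ y : M, a • y ≠ 0)
    (hb : ∃ y : M, b • y ≠ 0) : finrank k (LinearMap.range (Algebra.lsmul k k M b)) = 1 := by
  obtain ⟨u, hu⟩ := hb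
  rw [h.range_lsmul_right ha hu, finrank_span_singleton hu]

theorem nonempty_linearEquiv (h : IsSandwich k a b)
    (haM : ∃ y : M, a • y ≠ 0) (hbM : ∃ y : M, b • y ≠ 0)
    (haN : ∃ y : N, a • y ≠ 0) (hbN : ∃ y : N, b • y ≠ 0) : Nonempty (M ≃ₗ[A] N) := by
  obtain ⟨u, hu⟩ := hbM
  obtain ⟨v, hv⟩ := hbN
  have hau := h.smul_smul_ne_zero haM hu
  have hav := h.smul_smul_ne_zero haN hv
  have htors : Ideal.torsionOf A M (b • u) = Ideal.torsionOf A N (b • v) :=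
    (h.torsionOf_le_torsionOf hau hav).antisymm (h.torsionOf_le_torsionOf hav hau)
  exact ⟨(LinearMap.quotKerEquivOfSurjective _
    (IsSimpleModule.toSpanSingleton_surjective A hu)).symm ≪≫ₗ
    Submodule.quotEquivOfEq _ _ htors ≪≫ₗ
    LinearMap.quotKerEquivOfSurjective _ (IsSimpleModule.toSpanSingleton_surjective A hv)⟩

end IsSandwich

theorem exists_isSimpleModule_quotient_smul_ne_zero {R : Type*} [Ring R] [IsSemisimpleRing R]
    {c : R} (hc : c ≠ 0) : ∃ I : Ideal R, IsSimpleModule R (R ⧸ I) ∧ ∃ x : R ⧸ I, c • x ≠ 0 := by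
  have hJ : c ∉ Ring.jacobson R := by rwa [IsSemisimpleRing.jacobson_eq_bot, Ideal.mem_bot]
  rw [Ring.jacobson_eq_sInf_isMaximal, Submodule.mem_sInf] at hJ
  push Not at hJ
  obtain ⟨I, hI, hcI⟩ := hJ
  refine ⟨I, isSimpleModule_iff_isCoatom.2 (Ideal.isMaximal_def.1 hI), Submodule.Quotient.mk 1, ?_⟩
  rwa [← Submodule.Quotient.mk_smul, smul_eq_mul, mul_one, ne_eq, Submodule.Quotient.mk_eq_zero]

/-! ### Averages in the group algebra and multiplicities -/

section SignedAverage

open MonoidAlgebra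

variable (k : Type*) {G : Type*} [Field k] [Group G] [Fintype G]

/-- The average of `ε h • h` over `h ∈ K` in the group algebra: the idempotent projecting every
representation onto the vectors on which `K` acts through the sign character `ε`. It is `0` when
`|K|` vanishes in `k`. -/
def signedAverage (K : Subgroup G) (ε : G →* ℤˣ) : MonoidAlgebra k G :=
  (Nat.card K : k)⁻¹ • ∑ h : K, ε h • of k G h

variable {k} {K L : Subgroup G} {ε δ : G →* ℤˣ} {g : G}

theorem of_mul_signedAverage (hg : g ∈ K) :
    of k G g * signedAverage k K ε = ε g • signedAverage k K ε := by
  simp only [signedAverage, mul_smul_comm, Finset.mul_sum, Finset.smul_sum, ← map_mul]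
  refine Fintype.sum_equiv (Equiv.mulLeft (⟨g, hg⟩ : K)) _ _ fun h => ?_
  simp [smul_smul, smul_comm (ε g), mul_comm (ε g), mul_assoc (ε _)]

theorem signedAverage_mul_of (hg : g ∈ K) :
    signedAverage k K ε * of k G g = ε g • signedAverage k K ε := by
  simp only [signedAverage, smul_mul_assoc, Finset.sum_mul, Finset.smul_sum, ← map_mul]
  refine Fintype.sum_equiv (Equiv.mulRight (⟨g, hg⟩ : K)) _ _ fun h => ?_
  simp [smul_smul, smul_comm (ε g), mul_assoc (ε _)]

theorem trace_asAlgebraHom_signedAverage {W : Type*} [AddCommGroup W] [Module k W]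
    (ρ : Representation k G W) :
    LinearMap.trace k W (ρ.asAlgebraHom (signedAverage k K ε)) =
      (Nat.card K : k)⁻¹ * ∑ h : K, ((ε h : ℤ) : k) * ρ.character h := by
  simp [signedAverage, Representation.character, Units.smul_def]

variable [CharZero k]

theorem isIdempotentElem_signedAverage : IsIdempotentElem (signedAverage k K ε) := by
  have hK : (Nat.card K : k) ≠ 0 := Nat.cast_ne_zero.2 Nat.card_pos.ne'
  have habs (h : K) : ε h • of k G h * signedAverage k K ε = signedAverage k K ε := by
    rw [smul_mul_assoc, of_mul_signedAverage h.2, smul_smul, Int.units_mul_self, one_smul]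
  unfold IsIdempotentElem
  nth_rw 1 [signedAverage]
  rw [smul_mul_assoc, Finset.sum_mul, Finset.sum_congr rfl fun h _ => habs h, Finset.sum_const,
    Finset.card_univ, ← Nat.card_eq_fintype_card, ← Nat.cast_smul_eq_nsmul k, inv_smul_smul₀ hK]

theorem trace_asAlgebraHom_signedAverage_eq_finrank {W : Type*} [AddCommGroup W] [Module k W]
    [FiniteDimensional k W] (ρ : Representation k G W) :
    LinearMap.trace k W (ρ.asAlgebraHom (signedAverage k K ε)) =
      Module.finrank k (LinearMap.range (ρ.asAlgebraHom (signedAverage k K ε))) :=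
  (LinearMap.IsIdempotentElem.isProj_range _
    (isIdempotentElem_signedAverage.map ρ.asAlgebraHom)).trace

theorem signedAverage_mul_signedAverage_ne_zero (hKL : Disjoint K L) :
    signedAverage k K ε * signedAverage k L δ ≠ 0 := by
  have hone (h : K) (v : L) : (h * v : G) = 1 ↔ h = 1 ∧ v = 1 :=
    ⟨fun e => by simpa using Subgroup.disjoint_iff_mul_eq_one.1 hKL h.2 v.2 e,
      by rintro ⟨rfl, rfl⟩; simp⟩
  have hcoeff : (signedAverage k K ε * signedAverage k L δ).coeff 1 =
      (Nat.card L : k)⁻¹ * (Nat.card K : k)⁻¹ := by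
    simp [signedAverage, Finset.sum_mul, Finset.mul_sum, single_mul_single, Finsupp.single_apply,
      hone, ite_and, Units.smul_def]
  intro h0
  rw [h0] at hcoeff
  simp at hcoeff

theorem signedAverage_mul_of_mul_signedAverage_eq_zero {v : G} (hv : v ∈ L)
    (hK : g * v * g⁻¹ ∈ K) (hne : ε (g * v * g⁻¹) ≠ δ v) :
    signedAverage k K ε * of k G g * signedAverage k L δ = 0 := by
  set X := signedAverage k K ε * of k G g * signedAverage k L δ
  have hsmul : ε (g * v * g⁻¹) • X = δ v • X := calc
    _ = signedAverage k K ε * of k G (g * v * g⁻¹) * of k G g * signedAverage k L δ := by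
      rw [signedAverage_mul_of hK, smul_mul_assoc, smul_mul_assoc]
    _ = signedAverage k K ε * of k G g * (of k G v * signedAverage k L δ) := by
      simp only [mul_assoc (signedAverage k K ε), ← mul_assoc (of k G _), ← map_mul,
        inv_mul_cancel_right]
    _ = δ v • X := by rw [of_mul_signedAverage hv, mul_smul_comm]
  rw [Int.units_ne_iff_eq_neg.1 hne, Units.neg_smul, neg_eq_iff_add_eq_zero, ← smul_add,
    smul_eq_zero_iff_eq, ← two_smul k, smul_eq_zero] at hsmul
  exact hsmul.resolve_left two_ne_zero

theorem isSandwich_signedAverage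
    (hG : ∀ g, (∃ h ∈ K, ∃ v ∈ L, g = h * v) ∨
      ∃ v ∈ L, g * v * g⁻¹ ∈ K ∧ ε (g * v * g⁻¹) ≠ δ v) :
    IsSandwich k (signedAverage k K ε) (signedAverage k L δ) := by
  have hof (g : G) : ∃ s : k, signedAverage k K ε * of k G g * signedAverage k L δ =
      s • (signedAverage k K ε * signedAverage k L δ) := by
    rcases hG g with ⟨h, hh, v, hv, rfl⟩ | ⟨v, hv, hh, hne⟩
    · refine ⟨((ε h * δ v : ℤˣ) : ℤ), ?_⟩
      rw [map_mul, ← mul_assoc, signedAverage_mul_of hh, mul_assoc, of_mul_signedAverage hv,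
        smul_mul_smul_comm, Int.cast_smul_eq_zsmul, Units.smul_def]
    · exact ⟨0, by rw [signedAverage_mul_of_mul_signedAverage_eq_zero hv hh hne, zero_smul]⟩
  intro x
  induction x using MonoidAlgebra.induction_on with
  | of g => exact hof g
  | add x y hx hy =>
    obtain ⟨s, hs⟩ := hx
    obtain ⟨t, ht⟩ := hy
    exact ⟨s + t, by rw [mul_add, add_mul, hs, ht, add_smul]⟩
  | smul r x hx =>
    obtain ⟨s, hs⟩ := hx
    exact ⟨r * s, by rw [mul_smul_comm, smul_mul_assoc, hs, mul_smul]⟩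

end SignedAverage

/-- The character of the representation induced from the restriction to `K` of the sign
character `ε`. -/
def indSignedChar {G : Type*} [Group G] [Fintype G] (K : Subgroup G) (ε : G →* ℤˣ) (g : G) : ℂ :=
  (Nat.card K : ℂ)⁻¹ * ∑ x : G, if x⁻¹ * g * x ∈ K then ((ε (x⁻¹ * g * x) : ℤ) : ℂ) else 0

theorem indTrivChar_eq_indSignedChar {G : Type*} [Group G] [Fintype G] (K : Subgroup G) :
    indTrivChar K = indSignedChar K 1 := by
  ext g
  simp [indTrivChar, indSignedChar, Fintype.card_subtype]

theorem indSgnChar_eq_indSignedChar {n : ℕ} (K : Subgroup (Equiv.Perm (Fin n))) :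
    indSgnChar K = indSignedChar K Equiv.Perm.sign :=
  rfl

theorem finrank_range_asAlgebraHom {k G W : Type*} [Field k] [Group G] [AddCommGroup W]
    [Module k W] (ρ : Representation k G W) (c : MonoidAlgebra k G) :
    Module.finrank k (LinearMap.range (ρ.asAlgebraHom c)) =
      Module.finrank k (LinearMap.range (Algebra.lsmul k k ρ.asModule c)) :=
  rfl

section Multiplicity

variable {G : Type*} [Group G] [Fintype G] {K L : Subgroup G} {ε δ : G →* ℤˣ}

theorem innerChar_indSignedChar_eq_sum {χ : G → ℂ} (hχ : ∀ g h, χ (h * g * h⁻¹) = χ g) :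
    innerChar (indSignedChar K ε) χ =
      (Nat.card K : ℂ)⁻¹ * ∑ h : K, (ε h : ℤ) * starRingEnd ℂ (χ h) := by
  have hconj (x : G) : ∑ g : G, (if x⁻¹ * g * x ∈ K then ((ε (x⁻¹ * g * x) : ℤ) : ℂ) else 0) *
      starRingEnd ℂ (χ g) = ∑ h : K, (ε h : ℤ) * starRingEnd ℂ (χ h) := by
    rw [← Equiv.sum_comp (MulAut.conj x).toEquiv]
    simp only [MulEquiv.toEquiv_eq_coe, EquivLike.coe_coe, MulAut.conj_apply, hχ]
    simp only [mul_assoc, inv_mul_cancel_left, inv_mul_cancel, mul_one, ite_mul, zero_mul]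
    rw [← Finset.sum_filter]
    exact Finset.sum_subtype _ (by simp) _
  simp only [innerChar, indSignedChar, mul_assoc, Finset.sum_mul] at hconj ⊢
  rw [← Finset.mul_sum, Finset.sum_comm, Finset.sum_congr rfl fun x _ => hconj x, Finset.sum_const,
    Finset.card_univ, nsmul_eq_mul, mul_left_comm, inv_mul_cancel_left₀ (NeZero.ne _)]

variable {W : Type*} [AddCommGroup W] [Module ℂ W] [FiniteDimensional ℂ W]
  (ρ : Representation ℂ G W)

theorem innerChar_indSignedChar :
    innerChar (indSignedChar K ε) ρ.character =
      Module.finrank ℂ (LinearMap.range (ρ.asAlgebraHom (signedAverage ℂ K ε))) := by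
  have htrace := congrArg (starRingEnd ℂ) (trace_asAlgebraHom_signedAverage (K := K) (ε := ε) ρ)
  simp only [trace_asAlgebraHom_signedAverage_eq_finrank, map_natCast, map_mul, map_inv₀, map_sum,
    map_intCast] at htrace
  rw [innerChar_indSignedChar_eq_sum ρ.char_conj, htrace]

theorem innerChar_indSignedChar_ne_zero_iff :
    innerChar (indSignedChar K ε) ρ.character ≠ 0 ↔
      ∃ x : ρ.asModule, signedAverage ℂ K ε • x ≠ 0 := by
  rw [innerChar_indSignedChar, Nat.cast_ne_zero, Submodule.finrank_eq_zero.ne,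
    LinearMap.range_eq_bot.ne, DFunLike.ne_iff]
  rfl

theorem innerChar_indSignedChar_eq_one [ρ.IsIrreducible]
    (hKL : IsSandwich ℂ (signedAverage ℂ K ε) (signedAverage ℂ L δ))
    (hK : innerChar (indSignedChar K ε) ρ.character ≠ 0)
    (hL : innerChar (indSignedChar L δ) ρ.character ≠ 0) :
    innerChar (indSignedChar K ε) ρ.character = 1 ∧
      innerChar (indSignedChar L δ) ρ.character = 1 := by
  rw [innerChar_indSignedChar_ne_zero_iff] at hK hL
  simp only [innerChar_indSignedChar, Nat.cast_eq_one, finrank_range_asAlgebraHom]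
  exact ⟨hKL.finrank_range_lsmul_left hK hL, hKL.finrank_range_lsmul_right hK hL⟩

end Multiplicity

/-! ### Simple objects of `FDRep` -/

section FDRep

open CategoryTheory

universe u v

variable {k : Type u} {G : Type v} [Field k] [Group G]

theorem fdRep_hom_eq_zero_iff {V W : FDRep k G} {f : V ⟶ W} : f = 0 ↔ ∀ x, f.hom x = 0 :=
  ⟨by rintro rfl x; rfl, fun h => by ext x; exact h x⟩

/-- The inclusion of a subrepresentation, as a morphism of `FDRep k G`. -/
def subrepInclusion {V : FDRep k G} (N : Subrepresentation V.ρ) :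
    FDRep.of N.toRepresentation ⟶ V :=
  FDRep.forget₂HomLinearEquiv _ _ (Rep.ofHom ⟨N.toSubmodule.subtype, fun _ => rfl⟩)

instance mono_subrepInclusion {V : FDRep k G} (N : Subrepresentation V.ρ) :
    Mono (subrepInclusion N) :=
  (forget (FDRep k G)).mono_of_mono_map <|
    (mono_iff_injective _).2 N.toSubmodule.subtype_injective

theorem isIrreducible_of_simple (V : FDRep k G) [Simple V] :
    Representation.IsIrreducible V.ρ := by
  have : Nontrivial V := by
    by_contra hV
    rw [not_nontrivial_iff_subsingleton] at hV
    exact id_nonzero V (fdRep_hom_eq_zero_iff.2 fun x => Subsingleton.elim (α := V) _ _)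
  refine { exists_pair_ne := ⟨⊥, ⊤, fun h => ?_⟩, eq_bot_or_eq_top := fun N => ?_ }
  · exact bot_ne_top (α := Submodule k V) (congrArg Subrepresentation.toSubmodule h)
  · by_cases hN : subrepInclusion N = 0
    · refine .inl (Subrepresentation.toSubmodule_injective ?_)
      exact (Submodule.eq_bot_iff _).2 fun x hx => fdRep_hom_eq_zero_iff.1 hN ⟨x, hx⟩
    · have := isIso_of_mono_of_nonzero hN
      refine .inr (Subrepresentation.toSubmodule_injective (Submodule.eq_top_iff'.2 fun x => ?_))
      obtain ⟨y, rfl⟩ := (ConcreteCategory.bijective_of_isIso (subrepInclusion N)).2 x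
      exact y.2

theorem simple_of_isIrreducible (V : FDRep k G) [Representation.IsIrreducible V.ρ] :
    Simple V := by
  refine ⟨fun {U} f _ => ⟨?_, fun hf => ?_⟩⟩
  · rintro _ rfl
    have : Nontrivial V :=
      IsSimpleModule.nontrivial (MonoidAlgebra k G) (Representation.asModule V.ρ)
    obtain ⟨x, hx⟩ := exists_ne (0 : V)
    obtain ⟨y, rfl⟩ := (ConcreteCategory.bijective_of_isIso (0 : U ⟶ V)).2 x
    exact hx rfl
  · let φ : Representation.IntertwiningMap U.ρ V.ρ := ((forget₂ (FDRep k G) (Rep k G)).map f).hom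
    rcases Representation.IsIrreducible.surjective_or_eq_zero φ with hφ | hφ
    · have : Epi f := (forget (FDRep k G)).epi_of_epi_map ((epi_iff_surjective _).2 hφ)
      exact isIso_of_mono_of_epi f
    · exact absurd (fdRep_hom_eq_zero_iff.2 fun x => congr($hφ x)) hf

theorem nonempty_iso_of_linearEquiv {V W : FDRep k G}
    (e : Representation.asModule V.ρ ≃ₗ[MonoidAlgebra k G] Representation.asModule W.ρ) :
    Nonempty (V ≅ W) :=
  ⟨(forget₂ (FDRep k G) (Rep k G)).preimageIso <| Rep.mkIso <|
    Representation.IntertwiningMap.ofBijective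
      ((Representation.IntertwiningMap.equivLinearMapAsModule _ _).symm e.toLinearMap) e.bijective⟩

theorem asAlgebraHom_ofModule' (M : Type*) [AddCommGroup M] [Module k M]
    [Module (MonoidAlgebra k G) M] [IsScalarTower k (MonoidAlgebra k G) M] :
    (Representation.ofModule' M : Representation k G M).asAlgebraHom = Algebra.lsmul k k M :=
  (MonoidAlgebra.lift k _ G).apply_symm_apply _

theorem exists_simple_linearEquiv [Finite G] {M : Type u}
    [AddCommGroup M] [Module k M] [Module (MonoidAlgebra k G) M]
    [IsScalarTower k (MonoidAlgebra k G) M] [IsSimpleModule (MonoidAlgebra k G) M] :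
    ∃ V : FDRep k G, Simple V ∧
      Nonempty (M ≃ₗ[MonoidAlgebra k G] Representation.asModule V.ρ) := by
  let ρ : Representation k G M := .ofModule' M
  have : Module.Finite k M := .trans (MonoidAlgebra k G) M
  let e : M ≃ₗ[MonoidAlgebra k G] ρ.asModule :=
    { ρ.asModuleEquiv.symm with
      map_smul' := fun r x => congr($(asAlgebraHom_ofModule' (k := k) (G := G) M) r x).symm }
  have : Representation.IsIrreducible (FDRep.of ρ).ρ :=
    (Representation.irreducible_iff_isSimpleModule_asModule ρ).2 (.congr e.symm)
  exact ⟨FDRep.of ρ, simple_of_isIrreducible _, ⟨e⟩⟩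

theorem exists_simple_smul_ne_zero {k G : Type u} [Field k] [Group G] [Finite G]
    [NeZero (Nat.card G : k)] {c : MonoidAlgebra k G} (hc : c ≠ 0) :
    ∃ V : FDRep k G, Simple V ∧ ∃ x : Representation.asModule V.ρ, c • x ≠ 0 := by
  obtain ⟨I, hI, x, hx⟩ := exists_isSimpleModule_quotient_smul_ne_zero hc
  obtain ⟨V, hV, ⟨e⟩⟩ := exists_simple_linearEquiv (k := k) (G := G) (M := MonoidAlgebra k G ⧸ I)
  exact ⟨V, hV, e x, by rwa [← map_smul, e.map_ne_zero_iff]⟩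

end FDRep

theorem exists_unique_common_constituent {G : Type} [Group G] [Fintype G] {K L : Subgroup G}
    {ε δ : G →* ℤˣ} (hKL : Disjoint K L)
    (hG : ∀ g, (∃ h ∈ K, ∃ v ∈ L, g = h * v) ∨
      ∃ v ∈ L, g * v * g⁻¹ ∈ K ∧ ε (g * v * g⁻¹) ≠ δ v) :
    ∃ V : FDRep ℂ G, CategoryTheory.Simple V ∧
      innerChar (indSignedChar K ε) V.character = 1 ∧
      innerChar (indSignedChar L δ) V.character = 1 ∧
      ∀ W : FDRep ℂ G, CategoryTheory.Simple W →
        innerChar (indSignedChar K ε) W.character ≠ 0 →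
        innerChar (indSignedChar L δ) W.character ≠ 0 → Nonempty (V ≅ W) := by
  have hsand : IsSandwich ℂ (signedAverage ℂ K ε) (signedAverage ℂ L δ) :=
    isSandwich_signedAverage hG
  obtain ⟨V, hV, x, hx⟩ := exists_simple_smul_ne_zero
    (signedAverage_mul_signedAverage_ne_zero (k := ℂ) (ε := ε) (δ := δ) hKL)
  have := isIrreducible_of_simple V
  rw [mul_smul] at hx
  have hVK : innerChar (indSignedChar K ε) V.character ≠ 0 :=
    (innerChar_indSignedChar_ne_zero_iff V.ρ).2 ⟨_, hx⟩
  have hVL : innerChar (indSignedChar L δ) V.character ≠ 0 :=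
    (innerChar_indSignedChar_ne_zero_iff V.ρ).2 ⟨x, right_ne_zero_of_smul hx⟩
  obtain ⟨hVK_one, hVL_one⟩ := innerChar_indSignedChar_eq_one V.ρ hsand hVK hVL
  refine ⟨V, hV, hVK_one, hVL_one, fun W hW hWK hWL => ?_⟩
  have := isIrreducible_of_simple W
  obtain ⟨e⟩ := hsand.nonempty_linearEquiv
    ((innerChar_indSignedChar_ne_zero_iff V.ρ).1 hVK)
    ((innerChar_indSignedChar_ne_zero_iff V.ρ).1 hVL)
    ((innerChar_indSignedChar_ne_zero_iff W.ρ).1 hWK)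
    ((innerChar_indSignedChar_ne_zero_iff W.ρ).1 hWL)
  exact nonempty_iso_of_linearEquiv e

/-- **Frobenius–Young correspondence.** The induced representations
`Ind_{H(λ)}^{S_n} 1` and `Ind_{V(λ)}^{S_n} sgn` have exactly one common irreducible
constituent, which moreover occurs with multiplicity one in each of them. -/
theorem frobenius_young (n : ℕ) (hn : 1 ≤ n) (lam : YoungDiagram) (hlam : lam.card = n) :
    ∃ V : FDRep ℂ (Equiv.Perm (Fin n)), CategoryTheory.Simple V ∧
      innerChar (indTrivChar (youngH n lam)) V.character = 1 ∧
      innerChar (indSgnChar (youngV n lam)) V.character = 1 ∧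
      ∀ W : FDRep ℂ (Equiv.Perm (Fin n)), CategoryTheory.Simple W →
        innerChar (indTrivChar (youngH n lam)) W.character ≠ 0 →
        innerChar (indSgnChar (youngV n lam)) W.character ≠ 0 →
        Nonempty (V ≅ W) := by
  subst hlam
  rw [indTrivChar_eq_indSignedChar, indSgnChar_eq_indSignedChar]
  exact exists_unique_common_constituent disjoint_youngH_youngV exists_eq_mul_or_exists_conj_mem

end
end

section
/- Let G be a finite group, H and K subgroups of G, and χ the character of a finite-dimensional complex representation of H. For s ∈ G set H_s = sHs⁻¹ ∩ K and define χ_s on H_s by χ_s(x) = χ(s⁻¹xs). Then for any complete set S of representatives of the double cosets K\G/H and every g ∈ K, one has (Ind_H^G χ)(g) = Σ_{s ∈ S} (Ind_{H_s}^K χ_s)(g). (Mackey's formula: the restriction to K of the representation induced from H decomposes as the sum over double cosets of the representations induced from the conjugated representations on H_s.) -/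
open scoped Classical

noncomputable section

open MvPolynomial

/-- The class function induced from a class function `χ` on a subgroup `H`:
`(Ind_H^G χ)(g) = (1/|H|) Σ_{x : x⁻¹gx ∈ H} χ(x⁻¹gx)`. -/
noncomputable def indClassFn {G : Type} [Group G] [Fintype G] (H : Subgroup G)
    (chi : H → ℂ) (g : G) : ℂ :=
  (Nat.card H : ℂ)⁻¹ * ∑ x : G, if h : x⁻¹ * g * x ∈ H then chi ⟨x⁻¹ * g * x, h⟩ else 0

/-- The subgroup `H_s = sHs⁻¹ ∩ K`, realized as a subgroup of `K`
(note `x ∈ sHs⁻¹ ↔ s⁻¹xs ∈ H`). -/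
def mackeySubgroup {G : Type} [Group G] (H K : Subgroup G) (s : G) : Subgroup K where
  carrier := {x : K | s⁻¹ * (x : G) * s ∈ H}
  one_mem' := by simpa using one_mem H
  mul_mem' := by
    intro a b ha hb
    simp only [Set.mem_setOf_eq, Subgroup.coe_mul] at *
    have h : s⁻¹ * ((a : G) * (b : G)) * s = (s⁻¹ * (a : G) * s) * (s⁻¹ * (b : G) * s) := by
      group
    rw [h]
    exact mul_mem ha hb
  inv_mem' := by
    intro a ha
    simp only [Set.mem_setOf_eq, Subgroup.coe_inv] at *
    have h : s⁻¹ * ((a : G))⁻¹ * s = (s⁻¹ * (a : G) * s)⁻¹ := by group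
    rw [h]
    exact inv_mem ha

/-!
The induced character is a sum over cosets: `x ↦ χ(x⁻¹gx)`, extended by zero off `H`, depends only
on `xH`, so `(Ind_H^G χ)(g)` is the sum of a function on `G ⧸ H`. Restricted to `K`, the action of
`G` on `G ⧸ H` breaks up into the orbits of the cosets `sH`, whose stabilizers are the `H_s`, and by
orbit-stabilizer the sum over the orbit of `sH` is `(Ind_{H_s}^K χ_s)(g)`.
-/

section OrbitSums

variable {K X : Type*} [Group K] [Fintype K] [MulAction K X]

lemma card_filter_smul_eq_of_mem_orbit {x y : X} (hy : y ∈ MulAction.orbit K x) :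
    (Finset.univ.filter fun k : K => k • x = y).card = Nat.card (MulAction.stabilizer K x) := by
  obtain ⟨k₀, rfl⟩ := hy
  rw [Nat.card_eq_fintype_card, Fintype.card_subtype]
  refine Finset.card_equiv (Equiv.mulLeft k₀⁻¹) fun k => ?_
  simp only [Finset.mem_filter, Finset.mem_univ, true_and, Equiv.coe_mulLeft,
    MulAction.mem_stabilizer_iff, mul_smul, inv_smul_eq_iff]

lemma sum_smul_eq_card_stabilizer_nsmul {M : Type*} [AddCommMonoid M] (f : X → M) (x : X)
    [Fintype (MulAction.orbit K x)] :
    ∑ k : K, f (k • x) =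
      Nat.card (MulAction.stabilizer K x) • ∑ y ∈ (MulAction.orbit K x).toFinset, f y := by
  have image_eq : Finset.univ.image (fun k : K => k • x) = (MulAction.orbit K x).toFinset := by
    ext y
    simp [MulAction.mem_orbit_iff]
  rw [Finset.sum_comp f (fun k : K => k • x), image_eq, Finset.smul_sum]
  refine Finset.sum_congr rfl fun y hy => ?_
  rw [card_filter_smul_eq_of_mem_orbit (Set.mem_toFinset.1 hy)]

lemma inv_card_stabilizer_mul_sum_smul {𝕜 : Type*} [DivisionRing 𝕜] [CharZero 𝕜] (f : X → 𝕜)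
    (x : X) [Fintype (MulAction.orbit K x)] :
    (Nat.card (MulAction.stabilizer K x) : 𝕜)⁻¹ * ∑ k : K, f (k • x) =
      ∑ y ∈ (MulAction.orbit K x).toFinset, f y := by
  rw [sum_smul_eq_card_stabilizer_nsmul, nsmul_eq_mul,
    inv_mul_cancel_left₀ (Nat.cast_ne_zero.2 Nat.card_pos.ne')]

end OrbitSums

lemma sum_eq_sum_sum_of_existsUnique_mem {ι X M : Type*} [Fintype X] [AddCommMonoid M]
    (S : Finset ι) (t : ι → Finset X) (ht : ∀ y, ∃! s, s ∈ S ∧ y ∈ t s) (f : X → M) :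
    ∑ y, f y = ∑ s ∈ S, ∑ y ∈ t s, f y := by
  choose r hr r_unique using ht
  rw [← Finset.sum_fiberwise_of_maps_to (fun y _ => (hr y).1)]
  refine Finset.sum_congr rfl fun s hs => Finset.sum_congr ?_ fun _ _ => rfl
  ext y
  simp only [Finset.mem_filter, Finset.mem_univ, true_and]
  exact ⟨fun h => h ▸ (hr y).2, fun h => (r_unique y s ⟨hs, h⟩).symm⟩

lemma mk_mem_orbit_mk_iff {G : Type*} [Group G] (H K : Subgroup G) (s x : G) :
    (x : G ⧸ H) ∈ MulAction.orbit K (s : G ⧸ H) ↔ ∃ k ∈ K, ∃ h ∈ H, x = k * s * h := by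
  constructor
  · rintro ⟨k, hk⟩
    exact ⟨k, k.2, _, QuotientGroup.eq.1 hk, (mul_inv_cancel_left (k * s : G) x).symm⟩
  · rintro ⟨k, hk, h, hh, rfl⟩
    exact ⟨⟨k, hk⟩, (QuotientGroup.mk_mul_of_mem (k * s) hh).symm⟩

lemma stabilizer_mk_eq_mackeySubgroup {G : Type} [Group G] (H K : Subgroup G) (s : G) :
    MulAction.stabilizer K (s : G ⧸ H) = mackeySubgroup H K s := by
  ext k
  have smul_eq_iff : k • (s : G ⧸ H) = s ↔ s⁻¹ * (k : G) * s ∈ H := by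
    rw [eq_comm, mul_assoc]
    exact QuotientGroup.eq
  exact smul_eq_iff

section ClassFunctions

variable {G M : Type*} [Group G] [Zero M]

/-- The extension by zero to `G` of a function on the subgroup `H`, as it occurs in the summands
of `indClassFn`. -/
def zeroExtend (H : Subgroup G) (chi : H → M) (y : G) : M :=
  if h : y ∈ H then chi ⟨y, h⟩ else 0

lemma zeroExtend_conj {H : Subgroup G} {chi : H → M}
    (hchi : ∀ h x : H, chi (h * x * h⁻¹) = chi x) (h : H) (y : G) :
    zeroExtend H chi (h * y * (h : G)⁻¹) = zeroExtend H chi y := by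
  have conj_mem_iff : h * y * (h : G)⁻¹ ∈ H ↔ y ∈ H := by
    rw [H.mul_mem_cancel_right (H.inv_mem h.2), H.mul_mem_cancel_left h.2]
  unfold zeroExtend
  by_cases hy : y ∈ H
  · rw [dif_pos hy, dif_pos (conj_mem_iff.2 hy)]
    exact hchi h ⟨y, hy⟩
  · rw [dif_neg hy, dif_neg (mt conj_mem_iff.1 hy)]

/-- For a class function `χ` on `H`, the function `xH ↦ χ(x⁻¹gx)` on `G ⧸ H`, with value zero where
`x⁻¹gx ∉ H`. Its sum over `G ⧸ H` is `(Ind_H^G χ)(g)`. -/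
def cosetSummand {H : Subgroup G} (chi : H → M)
    (hchi : ∀ h x : H, chi (h * x * h⁻¹) = chi x) (g : G) : G ⧸ H → M :=
  Quotient.lift (fun x => zeroExtend H chi (x⁻¹ * g * x)) fun x y hxy => by
    have conj_eq : x⁻¹ * g * x = x⁻¹ * y * (y⁻¹ * g * y) * (x⁻¹ * y)⁻¹ := by group
    rw [conj_eq]
    exact zeroExtend_conj hchi ⟨x⁻¹ * y, QuotientGroup.leftRel_apply.1 hxy⟩ _

end ClassFunctions

section InducedClassFunctions

variable {G : Type} [Group G] [Fintype G] (H K : Subgroup G) (chi : H → ℂ)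
  (hchi : ∀ h x : H, chi (h * x * h⁻¹) = chi x)

lemma indClassFn_eq_sum_cosetSummand (g : G) :
    indClassFn H chi g = ∑ q : G ⧸ H, cosetSummand chi hchi g q := by
  have orbit_sum := inv_card_stabilizer_mul_sum_smul (K := G) (cosetSummand chi hchi g)
    ((1 : G) : G ⧸ H)
  simp only [MulAction.stabilizer_quotient, MulAction.orbit_eq_univ, Set.toFinset_univ,
    MulAction.Quotient.smul_coe, smul_eq_mul, mul_one] at orbit_sum
  exact orbit_sum

lemma indClassFn_mackeySubgroup_eq_sum_orbit (s : G) (g : K) :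
    indClassFn (mackeySubgroup H K s) (fun x => chi ⟨s⁻¹ * ((x : K) : G) * s, x.2⟩) g =
      ∑ q ∈ (MulAction.orbit K (s : G ⧸ H)).toFinset, cosetSummand chi hchi (g : G) q := by
  rw [← inv_card_stabilizer_mul_sum_smul, stabilizer_mk_eq_mackeySubgroup]
  refine congrArg _ (Finset.sum_congr rfl fun k _ => ?_)
  have conj_eq : s⁻¹ * ((k⁻¹ * g * k : K) : G) * s = ((k : G) * s)⁻¹ * g * (k * s) := by
    simp [mul_assoc]
  exact congrArg (zeroExtend H chi) conj_eq

end InducedClassFunctions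

theorem mackey_formula_general {G : Type} [Group G] [Fintype G] (H K : Subgroup G)
    (chi : H → ℂ) (hchi : ∀ h x : H, chi (h * x * h⁻¹) = chi x) (S : Finset G)
    (hS : ∀ g : G, ∃! s, s ∈ S ∧ ∃ k ∈ K, ∃ h ∈ H, g = k * s * h) (g : K) :
    indClassFn H chi (g : G) =
      ∑ s ∈ S, indClassFn (mackeySubgroup H K s)
        (fun x => chi ⟨s⁻¹ * ((x : K) : G) * s, x.2⟩) g := by
  have existsUnique_orbit (q : G ⧸ H) :
      ∃! s, s ∈ S ∧ q ∈ (MulAction.orbit K (s : G ⧸ H)).toFinset := by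
    induction q using QuotientGroup.induction_on with
    | H x => simpa only [Set.mem_toFinset, mk_mem_orbit_mk_iff] using hS x
  calc indClassFn H chi (g : G)
      = ∑ q : G ⧸ H, cosetSummand chi hchi (g : G) q := indClassFn_eq_sum_cosetSummand H chi hchi g
    _ = ∑ s ∈ S, ∑ q ∈ (MulAction.orbit K (s : G ⧸ H)).toFinset, cosetSummand chi hchi (g : G) q :=
        sum_eq_sum_sum_of_existsUnique_mem S _ existsUnique_orbit _
    _ = _ := Finset.sum_congr rfl fun s _ =>
        (indClassFn_mackeySubgroup_eq_sum_orbit H K chi hchi s g).symm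

/-- **Mackey's formula.** For subgroups `H, K` of a finite group `G`, the character `χ` of a
finite-dimensional complex representation `ρ` of `H`, and a complete set `S` of
representatives of the double cosets `K\G/H`, the restriction to `K` of the induced
character satisfies `(Ind_H^G χ)(g) = Σ_{s ∈ S} (Ind_{H_s}^K χ_s)(g)` for every `g ∈ K`,
where `H_s = sHs⁻¹ ∩ K` and `χ_s(x) = χ(s⁻¹xs)`. -/
theorem mackey_formula {G : Type} [Group G] [Fintype G] (H K : Subgroup G)
    (rho : FDRep ℂ H) (S : Finset G)
    (hS : ∀ g : G, ∃! s, s ∈ S ∧ ∃ k ∈ K, ∃ h ∈ H, g = k * s * h) (g : K) :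
    indClassFn H rho.character (g : G) =
      ∑ s ∈ S, indClassFn (mackeySubgroup H K s)
        (fun x => rho.character ⟨s⁻¹ * ((x : K) : G) * s, x.2⟩) g :=
  mackey_formula_general H K rho.character (fun h x => rho.char_conj x h) S hS g

end
end
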